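/- There exists an injective group homomorphism φ : 𝒫 → 𝒫₀ with φ(u) = u₁u₂ and φ(o) = o₁o₂; that is, the group 𝒫 = ⟨u, o | u o u⁻¹ = o^r⟩ embeds into 𝒫₀. -/

import Mathlib

/-- The generators `o₁, …, o_r, u₁, …, u₅` of the group `𝒫₀`. -/
inductive P0Gen (r : ℕ) : Type
  | o : Fin r → P0Gen r
  | u : Fin 5 → P0Gen r

/-- The free-group letter `o_k` (`1 ≤ k ≤ r`; junk value `1` out of range). -/
def oW (r : ℕ) (k : ℕ) : FreeGroup (P0Gen r) :=
  if h : 1 ≤ k ∧ k ≤ r then FreeGroup.of (P0Gen.o ⟨k - 1, by omega⟩) else 1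

/-- The free-group letter `u_k` (`1 ≤ k ≤ 5`; junk value `1` out of range). -/
def uW (r : ℕ) (k : ℕ) : FreeGroup (P0Gen r) :=
  if h : 1 ≤ k ∧ k ≤ 5 then FreeGroup.of (P0Gen.u ⟨k - 1, by omega⟩) else 1

/-- The relations `s² = e` for every generator `s` of `𝒫₀`. -/
def P0RelsSq (r : ℕ) : Set (FreeGroup (P0Gen r)) :=
  Set.range fun g : P0Gen r => FreeGroup.of g * FreeGroup.of g

/-- The relations `u₃ = u₂o₁u₂`, `u₄ = u₂o₂u₂`, `u₅ = u₁u₃u₁`, `o₂ = u₁u₄u₁`,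
`u₅ = o₁o_r o₁` of `𝒫₀`. -/
def P0RelsU (r : ℕ) : Set (FreeGroup (P0Gen r)) :=
  { uW r 2 * oW r 1 * uW r 2 * (uW r 3)⁻¹,
    uW r 2 * oW r 2 * uW r 2 * (uW r 4)⁻¹,
    uW r 1 * uW r 3 * uW r 1 * (uW r 5)⁻¹,
    uW r 1 * uW r 4 * uW r 1 * (oW r 2)⁻¹,
    oW r 1 * oW r r * oW r 1 * (uW r 5)⁻¹ }

/-- The remaining conjugacy relations of `𝒫₀`: if `r` is even, `o_{1+2j} = o₁o_{2j}o₁` and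
`o_{2+2j} = o₂o_{1+2j}o₂` for `j = 1, …, r/2 − 1`; if `r` is odd, `o₃ = o₂o₁o₂` together
with `o_{2+2j} = o₁o_{1+2j}o₁` and `o_{3+2j} = o₂o_{2+2j}o₂` for `j = 1, …, (r−3)/2`. -/
def P0RelsO (r : ℕ) : Set (FreeGroup (P0Gen r)) :=
  if Even r then
    ⋃ j ∈ Finset.Icc 1 (r / 2 - 1),
      ({oW r 1 * oW r (2 * j) * oW r 1 * (oW r (1 + 2 * j))⁻¹,
        oW r 2 * oW r (1 + 2 * j) * oW r 2 * (oW r (2 + 2 * j))⁻¹} :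
          Set (FreeGroup (P0Gen r)))
  else
    {oW r 2 * oW r 1 * oW r 2 * (oW r 3)⁻¹} ∪
    ⋃ j ∈ Finset.Icc 1 ((r - 3) / 2),
      ({oW r 1 * oW r (1 + 2 * j) * oW r 1 * (oW r (2 + 2 * j))⁻¹,
        oW r 2 * oW r (2 + 2 * j) * oW r 2 * (oW r (3 + 2 * j))⁻¹} :
          Set (FreeGroup (P0Gen r)))

/-- All defining relations of `𝒫₀`. -/
def P0Rels (r : ℕ) : Set (FreeGroup (P0Gen r)) := P0RelsSq r ∪ P0RelsU r ∪ P0RelsO r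

/-- The group `𝒫₀`, presented by the above generators and relations. -/
abbrev P0 (r : ℕ) : Type := PresentedGroup (P0Rels r)

/-- The generators `u`, `o` of the group `𝒫 = ⟨u, o | u o u⁻¹ = o^r⟩`. -/
inductive PGen : Type
  | u : PGen
  | o : PGen

/-- The single relation `u o u⁻¹ o^{-r}` of `𝒫`. -/
def PRels (r : ℕ) : Set (FreeGroup PGen) :=
  {FreeGroup.of PGen.u * FreeGroup.of PGen.o * (FreeGroup.of PGen.u)⁻¹ *
    (FreeGroup.of PGen.o ^ r)⁻¹}

/-- The group `𝒫 = ⟨u, o | u o u⁻¹ = o^r⟩`. -/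
abbrev Pgrp (r : ℕ) : Type := PresentedGroup (PRels r)

theorem bs_normal {G : Type*} [Group G] (u o : G) (r : ℕ) (h : u * o * u⁻¹ = o ^ r) (c : ℕ) (n : ℤ) :
    u ^ c * o ^ n = o ^ (n * (r : ℤ) ^ c) * u ^ c := by
  have h1 : ∀ n : ℤ, u * o ^ n = o ^ (n * (r : ℤ)) * u := by
    intro n
    have : u * o ^ n * u⁻¹ = o ^ (n * (r : ℤ)) := by
      rw [← conj_zpow, h, mul_comm, zpow_mul, zpow_natCast]
    rw [← this]; group
  induction c generalizing n with
  | zero => simp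
  | succ c ih =>
    rw [pow_succ, mul_assoc, h1, ← mul_assoc, ih, mul_assoc]
    congr 2
    ring

theorem pgrp_rel (r : ℕ) : (PresentedGroup.of PGen.u : Pgrp r) * PresentedGroup.of PGen.o *
    (PresentedGroup.of PGen.u)⁻¹ = (PresentedGroup.of PGen.o) ^ r := by
  have := PresentedGroup.one_of_mem (rels := PRels r) (x := FreeGroup.of PGen.u * FreeGroup.of PGen.o * (FreeGroup.of PGen.u)⁻¹ *
    (FreeGroup.of PGen.o ^ r)⁻¹) (by simp [PRels])
  simp only [map_mul, map_inv, map_pow] at this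
  exact mul_inv_eq_one.mp this

theorem pgrp_nf (r : ℕ) (g : Pgrp r) : ∃ (a b : ℕ) (n : ℤ),
    (PresentedGroup.of PGen.u : Pgrp r) ^ a * g =
      (PresentedGroup.of PGen.o : Pgrp r) ^ n * (PresentedGroup.of PGen.u : Pgrp r) ^ b := by
  have hc := bs_normal _ _ r (pgrp_rel r)
  induction g using PresentedGroup.induction_on with
  | _ z =>
  induction z using FreeGroup.induction_on with
  | C1 => exact ⟨0, 0, 0, by simp⟩
  | of x =>
    cases x with
    | u => exact ⟨0, 1, 0, by simp; rfl⟩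
    | o => exact ⟨0, 0, 1, by simp; rfl⟩
  | inv_of x _ =>
    cases x with
    | u => exact ⟨1, 0, 0, by rw [map_inv]; simp; exact mul_inv_cancel _⟩
    | o => exact ⟨0, 0, -1, by simp; rfl⟩
  | mul x y hx hy =>
    obtain ⟨a, b, n, h1⟩ := hx
    obtain ⟨c, d, m, h2⟩ := hy
    refine ⟨c + a, b + d, n * (r : ℤ) ^ c + m * (r : ℤ) ^ b, ?_⟩
    rw [map_mul, pow_add, mul_assoc, ← mul_assoc _ (PresentedGroup.mk _ x), h1, ← mul_assoc, ← mul_assoc,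
      hc, mul_assoc, mul_assoc, ← mul_assoc _ _ (PresentedGroup.mk _ y), ← pow_add, add_comm c b, pow_add,
      mul_assoc, h2, ← mul_assoc (_ ^ b), hc, zpow_add, pow_add]
    simp only [mul_assoc]

theorem p0_conj {G : Type*} [Group G] (a b : G) (m : ℤ) :
    b * (a * (b * (a * b) ^ m) * a) * b = b * (a * b) ^ (m + 2) := by
  have : (a * b) ^ (m + 2) = (a * b) * (a * b) ^ m * (a * b) := by
    rw [← zpow_one_add, ← zpow_add_one]
    congr 1; ring
  rw [this]; simp only [mul_assoc]

theorem rel_mk {r : ℕ} {x y : FreeGroup (P0Gen r)} (h : x * y⁻¹ ∈ P0Rels r) :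
    PresentedGroup.mk (P0Rels r) x = PresentedGroup.mk (P0Rels r) y := by
  have := PresentedGroup.one_of_mem h
  rw [map_mul, map_inv] at this
  exact mul_inv_eq_one.mp this

theorem sq_mk {r : ℕ} (x : P0Gen r) :
    PresentedGroup.mk (P0Rels r) (FreeGroup.of x) * PresentedGroup.mk (P0Rels r) (FreeGroup.of x) = 1 := by
  rw [← map_mul]
  exact PresentedGroup.one_of_mem (Or.inl (Or.inl ⟨x, rfl⟩))

theorem o_sq (r k : ℕ) :
    PresentedGroup.mk (P0Rels r) (oW r k) * PresentedGroup.mk (P0Rels r) (oW r k) = 1 := by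
  unfold oW; split_ifs
  · exact sq_mk _
  · simp

theorem u_sq (r k : ℕ) :
    PresentedGroup.mk (P0Rels r) (uW r k) * PresentedGroup.mk (P0Rels r) (uW r k) = 1 := by
  unfold uW; split_ifs
  · exact sq_mk _
  · simp

theorem o_even (r : ℕ) (he : Even r) (i : ℕ) (hi : 2 + 2 * i ≤ r) :
    PresentedGroup.mk (P0Rels r) (oW r (2 + 2 * i)) = PresentedGroup.mk (P0Rels r) (oW r 2) *
      (PresentedGroup.mk (P0Rels r) (oW r 1) * PresentedGroup.mk (P0Rels r) (oW r 2)) ^ ((2 * i : ℕ) : ℤ) := by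
  induction i with
  | zero => simp
  | succ i ih =>
    have e1 : oW r 1 * oW r (2 * (i+1)) * oW r 1 * (oW r (1 + 2 * (i+1)))⁻¹ ∈ P0Rels r := by
      right
      simp only [P0RelsO, he, if_true, Set.mem_iUnion]
      exact ⟨i + 1, by simp; omega, Or.inl rfl⟩
    have e2 : oW r 2 * oW r (1 + 2 * (i+1)) * oW r 2 * (oW r (2 + 2 * (i+1)))⁻¹ ∈ P0Rels r := by
      right
      simp only [P0RelsO, he, if_true, Set.mem_iUnion]
      exact ⟨i + 1, by simp; omega, Or.inr rfl⟩
    rw [← rel_mk e2, map_mul, map_mul, ← rel_mk e1, map_mul, map_mul, show 2 * (i+1) = 2 + 2 * i by ring, ih (by omega),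
      p0_conj]
    congr 2
    push_cast; ring

theorem o_odd (r : ℕ) (he : ¬ Even r) (i : ℕ) (hi : 3 + 2 * i ≤ r) :
    PresentedGroup.mk (P0Rels r) (oW r (3 + 2 * i)) = PresentedGroup.mk (P0Rels r) (oW r 2) *
      (PresentedGroup.mk (P0Rels r) (oW r 1) * PresentedGroup.mk (P0Rels r) (oW r 2)) ^ ((1 + 2 * i : ℕ) : ℤ) := by
  induction i with
  | zero =>
    have e1 : oW r 2 * oW r 1 * oW r 2 * (oW r 3)⁻¹ ∈ P0Rels r := by
      right
      simp only [P0RelsO, he, if_false]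
      exact Or.inl rfl
    simp [← rel_mk e1, mul_assoc]
  | succ i ih =>
    have e1 : oW r 1 * oW r (1 + 2 * (i+1)) * oW r 1 * (oW r (2 + 2 * (i+1)))⁻¹ ∈ P0Rels r := by
      right
      simp only [P0RelsO, he, if_false]
      right
      simp only [Set.mem_iUnion]
      exact ⟨i + 1, by simp; omega, Or.inl rfl⟩
    have e2 : oW r 2 * oW r (2 + 2 * (i+1)) * oW r 2 * (oW r (3 + 2 * (i+1)))⁻¹ ∈ P0Rels r := by
      right
      simp only [P0RelsO, he, if_false]
      right
      simp only [Set.mem_iUnion]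
      exact ⟨i + 1, by simp; omega, Or.inr rfl⟩
    rw [← rel_mk e2, map_mul, map_mul, ← rel_mk e1, map_mul, map_mul, show 1 + 2 * (i+1) = 3 + 2 * i by ring, ih (by omega),
      p0_conj]
    congr 2
    push_cast; ring

theorem o_last (r : ℕ) (hr : 2 ≤ r) :
    PresentedGroup.mk (P0Rels r) (oW r r) = PresentedGroup.mk (P0Rels r) (oW r 2) *
      (PresentedGroup.mk (P0Rels r) (oW r 1) * PresentedGroup.mk (P0Rels r) (oW r 2)) ^ (r - 2) := by
  by_cases he : Even r
  · have h := o_even r he ((r - 2) / 2) (by omega)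
    have h2 : 2 * ((r - 2) / 2) = r - 2 := by
      obtain ⟨k, rfl⟩ := he; omega
    rw [h2, zpow_natCast, show 2 + (r - 2) = r by omega] at h
    exact h
  · have h3 : r % 2 = 1 := by
      rw [Nat.not_even_iff] at he; exact he
    have h := o_odd r he ((r - 3) / 2) (by omega)
    rw [show 3 + 2 * ((r - 3) / 2) = r by omega, show 1 + 2 * ((r - 3) / 2) = r - 2 by omega, zpow_natCast] at h
    exact h

theorem p0_rel (r : ℕ) (hr : 2 ≤ r) :
    PresentedGroup.mk (P0Rels r) (uW r 1 * uW r 2) * PresentedGroup.mk (P0Rels r) (oW r 1 * oW r 2) *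
      (PresentedGroup.mk (P0Rels r) (uW r 1 * uW r 2))⁻¹ =
      (PresentedGroup.mk (P0Rels r) (oW r 1 * oW r 2)) ^ r := by
  have e1 := rel_mk (show uW r 2 * oW r 1 * uW r 2 * (uW r 3)⁻¹ ∈ P0Rels r from
    Or.inl (Or.inr (by simp [P0RelsU])))
  have e2 := rel_mk (show uW r 2 * oW r 2 * uW r 2 * (uW r 4)⁻¹ ∈ P0Rels r from
    Or.inl (Or.inr (by simp [P0RelsU])))
  have e3 := rel_mk (show uW r 1 * uW r 3 * uW r 1 * (uW r 5)⁻¹ ∈ P0Rels r from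
    Or.inl (Or.inr (by simp [P0RelsU])))
  have e4 := rel_mk (show uW r 1 * uW r 4 * uW r 1 * (oW r 2)⁻¹ ∈ P0Rels r from
    Or.inl (Or.inr (by simp [P0RelsU])))
  have e5 := rel_mk (show oW r 1 * oW r r * oW r 1 * (uW r 5)⁻¹ ∈ P0Rels r from
    Or.inl (Or.inr (by simp [P0RelsU])))
  simp only [map_mul] at *
  have h1 := u_sq r 1
  have h2 := u_sq r 2
  have h3 := o_sq r 2
  have hl := o_last r hr
  generalize PresentedGroup.mk (P0Rels r) (uW r 1) = u1 at *
  generalize PresentedGroup.mk (P0Rels r) (uW r 2) = u2 at *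
  generalize PresentedGroup.mk (P0Rels r) (oW r 1) = a at *
  generalize PresentedGroup.mk (P0Rels r) (oW r 2) = b at *
  have i1 : u1⁻¹ = u1 := inv_eq_of_mul_eq_one_left h1
  have i2 : u2⁻¹ = u2 := inv_eq_of_mul_eq_one_left h2
  have c1 : u1 * u2 * a * (u1 * u2)⁻¹ = a * b * (a * b) ^ (r - 2) * a := by
    rw [mul_inv_rev, i1, i2, mul_assoc a b, ← hl, e5, ← e3, ← e1]; simp only [mul_assoc]
  have c2 : u1 * u2 * b * (u1 * u2)⁻¹ = b := by
    rw [mul_inv_rev, i1, i2]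
    conv_rhs => rw [← e4, ← e2]
    simp only [mul_assoc]
  calc _ = (u1 * u2 * a * (u1 * u2)⁻¹) * (u1 * u2 * b * (u1 * u2)⁻¹) := by group
    _ = a * b * (a * b) ^ (r - 2) * (a * b) := by rw [c1, c2, mul_assoc _ a b]
    _ = (a * b) ^ r := by
      rw [← pow_succ', ← pow_succ]; congr 1; omega

/-- reflections on the left sheet -/
def reflL (c : ℚ) : Equiv.Perm (ℚ ⊕ ℚ) :=
  Function.Involutive.toPerm (Sum.elim (fun x => Sum.inl (c - x)) Sum.inr) (by rintro (x | x) <;> simp)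

/-- reflections on the right sheet -/
def reflR (c : ℚ) : Equiv.Perm (ℚ ⊕ ℚ) :=
  Function.Involutive.toPerm (Sum.elim Sum.inl (fun x => Sum.inr (c - x))) (by rintro (x | x) <;> simp)

/-- scaled swap of the sheets -/
def swp (s : ℚ) (hs : s ≠ 0) : Equiv.Perm (ℚ ⊕ ℚ) :=
  Function.Involutive.toPerm (Sum.elim (fun x => Sum.inr (x / s)) (fun x => Sum.inl (s * x)))
    (by rintro (x | x) <;> simp <;> field_simp)

/-- reflection centres -/
def cen (r k : ℕ) : ℚ := if k = 1 then 1 else if k = 2 then 0 else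
  if k % 2 = r % 2 then 2 - (k : ℚ) else (k : ℚ) - 1

/-- the representation on generators -/
def repGen (r : ℕ) (hs : (r : ℚ) ≠ 0) : P0Gen r → Equiv.Perm (ℚ ⊕ ℚ)
  | .o i => reflL (cen r (i + 1))
  | .u 0 => swp r hs
  | .u 1 => swp 1 one_ne_zero
  | .u 2 => reflR 1
  | .u 3 => reflR 0
  | .u 4 => reflL r

theorem reflL_conj (c d : ℚ) : reflL c * reflL d * reflL c = reflL (2 * c - d) := by
  ext (x | x) <;> simp [reflL, Function.Involutive.toPerm] ; ring

theorem swp_conj (s : ℚ) (hs : s ≠ 0) (d : ℚ) : swp s hs * reflR d * swp s hs = reflL (s * d) := by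
  ext (x | x) <;> simp [swp, reflR, reflL, Function.Involutive.toPerm] <;> field_simp

theorem swp_conj_one (d : ℚ) :
    swp 1 one_ne_zero * reflL d * swp 1 one_ne_zero = reflR d := by
  ext (x | x) <;> simp [swp, reflR, reflL, Function.Involutive.toPerm]

theorem lift_o (r : ℕ) (hs : (r : ℚ) ≠ 0) (k : ℕ) (h1 : 1 ≤ k) (h2 : k ≤ r) :
    FreeGroup.lift (repGen r hs) (oW r k) = reflL (cen r k) := by
  simp [oW, h1, h2, repGen]

theorem invol_sq (f : ℚ ⊕ ℚ → ℚ ⊕ ℚ) (hf : Function.Involutive f) : hf.toPerm * hf.toPerm = 1 := by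
  ext x; simp [hf x]

theorem reflL_sq (c : ℚ) : reflL c * reflL c = 1 := by
  unfold reflL; exact invol_sq _ _

theorem reflR_sq (c : ℚ) : reflR c * reflR c = 1 := by
  unfold reflR; exact invol_sq _ _

theorem swp_sq (s : ℚ) (hs : s ≠ 0) : swp s hs * swp s hs = 1 := by
  unfold swp; exact invol_sq _ _

theorem rep_rels (r : ℕ) (hr : 2 ≤ r) (hs : (r : ℚ) ≠ 0) (w : FreeGroup (P0Gen r)) (hw : w ∈ P0Rels r) :
    FreeGroup.lift (repGen r hs) w = 1 := by
  have l1 := lift_o r hs 1 (by omega) (by omega)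
  have l2 := lift_o r hs 2 (by omega) (by omega)
  have lr := lift_o r hs r (by omega) (by omega)
  have v1 : FreeGroup.lift (repGen r hs) (uW r 1) = swp r hs := by simp [uW, repGen]
  have v2 : FreeGroup.lift (repGen r hs) (uW r 2) = swp 1 one_ne_zero := by simp [uW, repGen]
  have v3 : FreeGroup.lift (repGen r hs) (uW r 3) = reflR 1 := by simp [uW]; rfl
  have v4 : FreeGroup.lift (repGen r hs) (uW r 4) = reflR 0 := by simp [uW]; rfl
  have v5 : FreeGroup.lift (repGen r hs) (uW r 5) = reflL r := by simp [uW]; rfl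
  have k1 : cen r 1 = 1 := by simp [cen]
  have k2 : cen r 2 = 0 := by simp [cen]
  have kr : cen r r = 2 - r := by
    unfold cen; split_ifs with h h
    · omega
    · rw [h]; norm_num
    · rfl
    · omega
  rw [k1] at l1
  rw [k2] at l2
  rw [kr] at lr
  rcases hw with (hw | hw) | hw
  · obtain ⟨g, rfl⟩ := hw
    rw [map_mul, FreeGroup.lift_apply_of]
    rcases g with i | i
    · exact reflL_sq _
    · fin_cases i
      · exact swp_sq _ hs
      · exact swp_sq _ one_ne_zero
      · exact reflR_sq _
      · exact reflR_sq _
      · exact reflL_sq _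
  · simp only [P0RelsU, Set.mem_insert_iff, Set.mem_singleton_iff] at hw
    rcases hw with rfl | rfl | rfl | rfl | rfl <;>
      rw [map_mul, map_inv, mul_inv_eq_one, map_mul, map_mul]
    · rw [v2, l1, v3, swp_conj_one]
    · rw [v2, l2, v4, swp_conj_one]
    · rw [v1, v3, v5, swp_conj, mul_one]
    · rw [v1, v4, l2, swp_conj, mul_zero]
    · rw [l1, lr, v5, reflL_conj]; congr 1; ring
  · unfold P0RelsO at hw
    split_ifs at hw with he
    · have hm : r % 2 = 0 := Nat.even_iff.mp he
      simp only [Set.mem_iUnion, Finset.mem_Icc, Set.mem_insert_iff, Set.mem_singleton_iff] at hw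
      obtain ⟨j, hj, rfl | rfl⟩ := hw <;>
        rw [map_mul, map_inv, mul_inv_eq_one, map_mul, map_mul]
      · rw [l1, lift_o r hs (2 * j) (by omega) (by omega), lift_o r hs (1 + 2 * j) (by omega) (by omega), reflL_conj]
        congr 1
        rw [cen, cen]
        split_ifs <;> first | omega | skip
        · have : j = 1 := by omega
          subst this; norm_num
        · push_cast; ring
      · rw [l2, lift_o r hs (2 + 2 * j) (by omega) (by omega), lift_o r hs (1 + 2 * j) (by omega) (by omega), reflL_conj]
        congr 1
        rw [cen, cen]
        split_ifs <;> first | omega | skip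
        push_cast; ring
    · have hm : r % 2 = 1 := by rwa [Nat.not_even_iff] at he
      rcases hw with hw | hw
      · rw [Set.mem_singleton_iff] at hw
        subst hw
        rw [map_mul, map_inv, mul_inv_eq_one, map_mul, map_mul, l1, l2, lift_o r hs 3 (by omega) (by omega), reflL_conj]
        congr 1
        simp [cen, hm]; norm_num
      simp only [Set.mem_iUnion, Finset.mem_Icc, Set.mem_insert_iff, Set.mem_singleton_iff] at hw
      obtain ⟨j, hj, rfl | rfl⟩ := hw <;>
        rw [map_mul, map_inv, mul_inv_eq_one, map_mul, map_mul]
      · rw [l1, lift_o r hs (2 + 2 * j) (by omega) (by omega), lift_o r hs (1 + 2 * j) (by omega) (by omega), reflL_conj]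
        congr 1
        rw [cen, cen]
        split_ifs <;> first | omega | skip
        push_cast; ring
      · rw [l2, lift_o r hs (2 + 2 * j) (by omega) (by omega), lift_o r hs (3 + 2 * j) (by omega) (by omega), reflL_conj]
        congr 1
        rw [cen, cen]
        split_ifs <;> first | omega | skip
        push_cast; ring

/-- images of the generators of `Pgrp` -/
def phiGen (r : ℕ) : PGen → P0 r
  | .u => PresentedGroup.mk (P0Rels r) (uW r 1 * uW r 2)
  | .o => PresentedGroup.mk (P0Rels r) (oW r 1 * oW r 2)

/-- The group `𝒫 = ⟨u, o | u o u⁻¹ = o^r⟩` embeds into `𝒫₀`: there is an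
injective group homomorphism `φ : 𝒫 → 𝒫₀` with `φ(u) = u₁u₂` and `φ(o) = o₁o₂`. -/
theorem stmt_3 (r : ℕ) (hr : 2 ≤ r) :
    ∃ φ : Pgrp r →* P0 r, Function.Injective φ ∧
      φ (PresentedGroup.of PGen.u) = PresentedGroup.mk (P0Rels r) (uW r 1 * uW r 2) ∧
      φ (PresentedGroup.of PGen.o) = PresentedGroup.mk (P0Rels r) (oW r 1 * oW r 2) := by
  have hs : (r : ℚ) ≠ 0 := by positivity
  have hφ : ∀ w ∈ PRels r, FreeGroup.lift (phiGen r) w = 1 := by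
    intro w hw
    rw [PRels, Set.mem_singleton_iff] at hw
    subst hw
    rw [map_mul, map_inv, mul_inv_eq_one]
    simp only [map_mul, map_inv, map_pow, FreeGroup.lift_apply_of]
    exact p0_rel r hr
  let φ : Pgrp r →* P0 r := PresentedGroup.toGroup hφ
  have φu : φ (PresentedGroup.of PGen.u) = PresentedGroup.mk (P0Rels r) (uW r 1 * uW r 2) :=
    PresentedGroup.toGroup.of hφ
  have φo : φ (PresentedGroup.of PGen.o) = PresentedGroup.mk (P0Rels r) (oW r 1 * oW r 2) :=
    PresentedGroup.toGroup.of hφ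
  refine ⟨φ, ?_, φu, φo⟩
  let ρ : P0 r →* Equiv.Perm (ℚ ⊕ ℚ) := PresentedGroup.toGroup (rep_rels r hr hs)
  have ρmk : ∀ w, ρ (PresentedGroup.mk (P0Rels r) w) = FreeGroup.lift (repGen r hs) w := fun w => rfl
  have hU : ∀ x : ℚ, ρ (φ (PresentedGroup.of PGen.u)) (Sum.inl x) = Sum.inl (r * x) := by
    intro x
    rw [φu, ρmk]
    simp [uW, repGen, swp, Function.Involutive.toPerm]
  have hO : ∀ x : ℚ, ρ (φ (PresentedGroup.of PGen.o)) (Sum.inl x) = Sum.inl (1 + x) := by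
    intro x
    rw [φo, ρmk, map_mul, lift_o r hs 1 (by omega) (by omega), lift_o r hs 2 (by omega) (by omega)]
    simp [cen, reflL, Function.Involutive.toPerm]
  have hUp : ∀ (n : ℕ) (x : ℚ), ρ (φ ((PresentedGroup.of PGen.u) ^ n)) (Sum.inl x) = Sum.inl (r ^ n * x) := by
    intro n
    induction n with
    | zero => intro x; simp
    | succ n ih =>
      intro x
      rw [pow_succ, map_mul, map_mul, Equiv.Perm.mul_apply, hU, ih]
      congr 1; ring
  have hOp : ∀ (n : ℕ) (x : ℚ), ρ (φ ((PresentedGroup.of PGen.o) ^ n)) (Sum.inl x) = Sum.inl (n + x) := by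
    intro n
    induction n with
    | zero => intro x; simp
    | succ n ih =>
      intro x
      rw [pow_succ, map_mul, map_mul, Equiv.Perm.mul_apply, hO, ih]
      congr 1; push_cast; ring
  have hOz : ∀ (n : ℤ) (x : ℚ), ρ (φ ((PresentedGroup.of PGen.o) ^ n)) (Sum.inl x) = Sum.inl (n + x) := by
    intro n x
    obtain ⟨m, rfl | rfl⟩ := n.eq_nat_or_neg
    · rw [zpow_natCast, hOp]; simp
    · rw [zpow_neg, zpow_natCast, map_inv, map_inv, Equiv.Perm.inv_eq_iff_eq, hOp]
      congr 1; push_cast; ring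
  rw [injective_iff_map_eq_one]
  intro g hg
  obtain ⟨a, b, n, h⟩ := pgrp_nf r g
  have key : ∀ x : ℚ, (r : ℚ) ^ a * x = n + r ^ b * x := by
    intro x
    have h2 := congrArg (fun z => ρ (φ z) (Sum.inl x)) h
    simp only [map_mul φ, hg, mul_one] at h2
    rw [hUp, map_mul, Equiv.Perm.mul_apply, hUp, hOz] at h2
    exact Sum.inl_injective h2
  have hn : n = 0 := by
    have := key 0
    simp at this
    exact_mod_cast this.symm
  have hab : a = b := by
    have := key 1
    rw [hn] at this
    simp at this
    have h3 : r ^ a = r ^ b := by exact_mod_cast this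
    exact Nat.pow_right_injective hr h3
  subst hab
  rw [hn, zpow_zero, one_mul] at h
  exact mul_eq_left.mp h
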